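/- For every integer n ≥ 2 and every integer L ≥ 0 there exists a constant C = C(L,n) such that for every integer d ≥ 1, every integer ℓ ≥ 0, and every d-maximal set S ⊆ [n]^∞ containing no (L+1)-ball, the set S^{(ℓ)} is finite and |S^{(ℓ)}| ≤ C·d^{2L+2}·(n + 8·n^{2/3})^d. -/

import Mathlib

/-- Hamming distance between infinite words over `Fin n`, as an extended natural number. -/
noncomputable def hDist (n : ℕ) (a b : ℕ → Fin n) : ℕ∞ := {i | a i ≠ b i}.encard

/-- The `r`-ball around `a`. -/
def hBall (n : ℕ) (a : ℕ → Fin n) (r : ℕ) : Set (ℕ → Fin n) := {x | hDist n x a ≤ (r : ℕ∞)}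

/-- `S` is `d`-maximal: it has diameter `d` and any point within distance `d`
of all of `S` already belongs to `S`. -/
def IsDMaximal (n d : ℕ) (S : Set (ℕ → Fin n)) : Prop :=
  (∀ a ∈ S, ∀ b ∈ S, hDist n a b ≤ (d : ℕ∞)) ∧
  (∃ a ∈ S, ∃ b ∈ S, hDist n a b = (d : ℕ∞)) ∧
  (∀ x : ℕ → Fin n, (∀ s ∈ S, hDist n x s ≤ (d : ℕ∞)) → x ∈ S)

/-- `S` contains an `r`-ball. -/
def ContainsBall (n : ℕ) (S : Set (ℕ → Fin n)) (r : ℕ) : Prop :=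
  ∃ a, hBall n a r ⊆ S

/-- `S^(ℓ)`: centers of `ℓ`-balls contained in `S` that are not contained in any
`(ℓ+1)`-ball inside `S`. -/
def Sell (n : ℕ) (S : Set (ℕ → Fin n)) (ℓ : ℕ) : Set (ℕ → Fin n) :=
  {a ∈ S | hBall n a ℓ ⊆ S ∧
    ¬ ∃ b, hBall n a ℓ ⊆ hBall n b (ℓ + 1) ∧ hBall n b (ℓ + 1) ⊆ S}

/-!
Maximality turns balls into distances: `Ball(a, r) ⊆ S` if and only if `dist(a, s) + r ≤ d` for all
`s ∈ S`. Given any guess `w`, let `t` be a point of `S` farthest from `w`. If `a ∈ S^(ℓ)` differs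
from `w`, then `dist(a, t) < dist(w, t) + dist(a, w)`, for otherwise one step from `a` towards `w`
would give the centre of an `(ℓ + 1)`-ball; and `dist(a, t) ≤ d - ℓ ≤ dist(w, t) + L`, because `S`
contains no `(L + 1)`-ball. So replacing `w` by `a` in the coordinates where `t` may differ from `w`
repairs at least one error of `w`, and at least half of them up to `L`.

Fix `t₀, t₁ ∈ S` at distance `d`, differing exactly on `D`. A word of `S` that agrees with `t₀` or
`t₁` in `k` coordinates of `D` differs from `t₀` in at most `k / 2` coordinates outside `D`. Reveal
`a` on `D`, guess `t₀` elsewhere, and then repeatedly reveal `a` on the at most `d / 2` coordinates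
outside `D` where `t` differs from `t₀`. The outcomes of each query are counted with weight `x / n`
per repaired error, where `x` is halved from round to round; the revealed values on `D` are counted
with weight `s` for each agreement with `t₀` or `t₁`. If `s² x = 2 n`, this gives
`((n + 2 s) exp x) ^ d` words up to a polynomial factor in `d`, and we take `x = 1 / (2 n^(1/3))`.
-/

open Finset Real

section Hamming

variable {n : ℕ} {a b c : ℕ → Fin n}

theorem hDist_self (a : ℕ → Fin n) : hDist n a a = 0 := by
  simp [hDist]

theorem hDist_eq_zero : hDist n a b = 0 ↔ a = b := by
  simp [hDist, Set.eq_empty_iff_forall_notMem, funext_iff]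

theorem hDist_comm (a b : ℕ → Fin n) : hDist n a b = hDist n b a := by
  simp only [hDist, ne_comm]

theorem hDist_triangle (a b c : ℕ → Fin n) : hDist n a c ≤ hDist n a b + hDist n b c := by
  refine (Set.encard_le_encard fun i hac => ?_).trans (Set.encard_union_le _ _)
  by_contra h
  simp only [Set.mem_union, Set.mem_ofPred_eq, not_or, not_not] at h
  exact hac (h.1.trans h.2)

theorem hDist_add_hDist_of_between (h : ∀ i, b i = a i ∨ b i = c i) :
    hDist n a b + hDist n b c = hDist n a c := by
  unfold hDist
  rw [← Set.encard_union_eq]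
  · congr 1
    ext i
    rcases h i with hi | hi <;> simp [hi]
  · refine Set.disjoint_left.2 fun i hab hbc => ?_
    exact (h i).elim (fun hi => hab hi.symm) hbc

theorem hDist_eq_card_filter {F : Finset ℕ} (h : ∀ i ∉ F, a i = b i) :
    hDist n a b = #{i ∈ F | a i ≠ b i} := by
  rw [hDist, ← Set.encard_coe_eq_coe_finsetCard]
  congr 1
  ext i
  by_cases hi : i ∈ F <;> simp [hi, h]

theorem hDist_piecewise_lt_top (F : Finset ℕ) (a b : ℕ → Fin n) :
    hDist n (F.piecewise a b) b < ⊤ := by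
  rw [hDist_eq_card_filter (F := F) fun i hi => by simp [hi]]
  exact ENat.natCast_lt_top _

theorem hDist_update {i : ℕ} {x : Fin n} (hx : x ≠ a i) :
    hDist n a (Function.update a i x) = 1 := by
  rw [hDist_eq_card_filter (F := {i}) fun j hj => by simp_all]
  simp [Finset.filter_singleton, hx.symm]

theorem hBall_subset_hBall {k : ℕ} (r : ℕ) (h : hDist n a b ≤ k) :
    hBall n a r ⊆ hBall n b (r + k) := fun x hx => by
  calc hDist n x b ≤ hDist n x a + hDist n a b := hDist_triangle x a b
    _ ≤ r + k := add_le_add hx h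
    _ = (r + k : ℕ) := (Nat.cast_add r k).symm

theorem exists_hDist_eq_add (hn : 2 ≤ n) (hab : hDist n a b < ⊤) (k : ℕ) :
    ∃ c, hDist n c a = k ∧ hDist n c b = k + hDist n a b := by
  have : Nontrivial (Fin n) := Fin.nontrivial_iff_two_le.2 hn
  obtain ⟨K, hK, hKk⟩ := (Set.encard_lt_top_iff.1 hab).infinite_compl.exists_subset_card_eq k
  choose other hother using fun x : Fin n => exists_ne x
  let c := K.piecewise (other ∘ a) a
  have hca : hDist n c a = k := by
    rw [hDist_eq_card_filter (F := K) (by simp +contextual [c]), filter_true_of_mem, hKk]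
    simp +contextual [c, hother]
  refine ⟨c, hca, ?_⟩
  rw [← hca, hDist_add_hDist_of_between]
  intro i
  by_cases hi : i ∈ K
  · exact Or.inr (not_not.1 (hK hi))
  · simp [c, hi]

theorem exists_farthest {S : Set (ℕ → Fin n)} {d : ℕ} {w t₀ : ℕ → Fin n} (ht₀ : t₀ ∈ S)
    (hS : ∀ s ∈ S, hDist n t₀ s ≤ d) (hw : hDist n w t₀ < ⊤) :
    ∃ t ∈ S, ∀ s ∈ S, hDist n w s ≤ hDist n w t := by
  have : Nonempty S := ⟨⟨t₀, ht₀⟩⟩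
  have hbdd : ⨆ s : S, hDist n w s ≤ hDist n w t₀ + d :=
    iSup_le fun s => (hDist_triangle w t₀ s).trans (by gcongr; exact hS s s.2)
  obtain ⟨t, ht⟩ := ENat.exists_eq_iSup_of_lt_top
    (hbdd.trans_lt (ENat.add_lt_top.2 ⟨hw, ENat.natCast_lt_top d⟩))
  exact ⟨t, t.2, fun s hs => ht ▸ le_iSup (fun s : S => hDist n w s) ⟨s, hs⟩⟩

end Hamming

section Guide

variable {n d ℓ L : ℕ} {S A : Set (ℕ → Fin n)} {a w w' t : ℕ → Fin n}

theorem IsDMaximal.hBall_subset_iff (hn : 2 ≤ n) (hS : IsDMaximal n d S) {r : ℕ} :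
    hBall n a r ⊆ S ↔ ∀ s ∈ S, hDist n a s + r ≤ d := by
  constructor
  · intro hball s hs
    have ha : a ∈ S := hball (by simp [hBall, hDist_self])
    obtain ⟨c, hca, hcs⟩ :=
      exists_hDist_eq_add hn ((hS.1 a ha s hs).trans_lt (ENat.natCast_lt_top d)) r
    rw [add_comm, ← hcs]
    exact hS.1 c (hball hca.le) s hs
  · intro h x hx
    refine hS.2.2 x fun s hs => ?_
    calc hDist n x s ≤ hDist n x a + hDist n a s := hDist_triangle x a s
      _ ≤ r + hDist n a s := by gcongr; exact hx
      _ ≤ d := by rw [add_comm]; exact h s hs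

/-- `t` guides the search for words of `A` from the current guess `w`: for every `a ∈ A`,
comparing `a` with `t` reveals coordinates in which `w` is wrong, and at least half of the wrong
ones up to an error `L` (see `IsGuide.two_mul_hDist_le`). -/
def IsGuide (L : ℕ) (A : Set (ℕ → Fin n)) (w t : ℕ → Fin n) : Prop :=
  ∀ a ∈ A, hDist n a t ≤ hDist n w t + L ∧
    (a ≠ w → hDist n a t < hDist n w t + hDist n a w)

theorem IsDMaximal.isGuide_of_farthest (hn : 2 ≤ n) (hS : IsDMaximal n d S)
    (hL : ¬ ContainsBall n S (L + 1)) (ht : t ∈ S)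
    (hmax : ∀ s ∈ S, hDist n w s ≤ hDist n w t) : IsGuide L (Sell n S ℓ) w t := by
  rintro a ⟨-, hball, hmaxball⟩
  have hat : hDist n a t + ℓ ≤ d := (hS.hBall_subset_iff hn).1 hball t ht
  constructor
  · have hwt : d ≤ hDist n w t + L := by
      by_contra! hlt
      refine hL ⟨w, (hS.hBall_subset_iff hn).2 fun s hs => ?_⟩
      calc hDist n w s + (L + 1 : ℕ) ≤ hDist n w t + L + 1 := by
            push_cast; rw [← add_assoc]; gcongr; exact hmax s hs
        _ ≤ d := Order.add_one_le_of_lt hlt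
    exact le_self_add.trans (hat.trans hwt)
  · intro haw
    by_contra! hle
    -- One step from `a` towards `w` would yield the centre of an `(ℓ + 1)`-ball inside `S`.
    obtain ⟨i, hi⟩ := Function.ne_iff.1 haw
    let b := Function.update a i (w i)
    have hab : hDist n a b = 1 := hDist_update hi.symm
    have hbw : hDist n a b + hDist n b w = hDist n a w :=
      hDist_add_hDist_of_between fun j => by
        rcases eq_or_ne j i with rfl | hj <;> simp [b, *]
    refine hmaxball ⟨b, hBall_subset_hBall ℓ hab.le, (hS.hBall_subset_iff hn).2 fun s hs => ?_⟩
    calc hDist n b s + (ℓ + 1 : ℕ)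
        ≤ hDist n b w + hDist n w t + (ℓ + 1 : ℕ) := by
          gcongr; exact (hDist_triangle b w s).trans (by gcongr; exact hmax s hs)
      _ = hDist n w t + hDist n a w + ℓ := by rw [← hbw, hab]; push_cast; ring
      _ ≤ hDist n a t + ℓ := by gcongr
      _ ≤ d := hat

theorem IsGuide.two_mul_hDist_le (h : IsGuide L A w t) (ha : a ∈ A) (haw : a ≠ w)
    (hw : ∀ i, w' i = a i ∨ w' i = w i) (ht : ∀ i, w' i = a i ∨ w' i = t i) :
    hDist n a w' < hDist n a w ∧ 2 * hDist n a w' ≤ hDist n a w + L := by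
  obtain ⟨hle, hlt⟩ := h a ha
  have hsplit_w : hDist n a w' + hDist n w' w = hDist n a w := hDist_add_hDist_of_between hw
  have hsplit_t : hDist n a w' + hDist n w' t = hDist n a t := hDist_add_hDist_of_between ht
  have hfin : hDist n a w' < ⊤ ∧ hDist n w' t < ⊤ :=
    ENat.add_lt_top.1 (hsplit_t ▸ (hlt haw).trans_le le_top)
  have hw'w : hDist n w' w ≠ 0 := fun h0 => by
    obtain rfl := hDist_eq_zero.1 h0
    exact (hlt haw).ne (hsplit_t ▸ add_comm _ _)
  have hhalf : hDist n a w' ≤ hDist n w' w + L := by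
    refine (ENat.add_le_add_iff_right hfin.2.ne).1 ?_
    calc hDist n a w' + hDist n w' t ≤ hDist n w t + L := hsplit_t ▸ hle
      _ ≤ hDist n w w' + hDist n w' t + L := by gcongr; exact hDist_triangle w w' t
      _ = hDist n w' w + L + hDist n w' t := by rw [hDist_comm w w']; ring
  rw [← hsplit_w, two_mul, add_assoc]
  constructor
  · simpa using ENat.add_lt_add_of_le_of_lt hfin.1.ne le_rfl (pos_iff_ne_zero.2 hw'w)
  · gcongr

end Guide

section Counting

theorem finite_and_ncard_le_of_forall_finset {β : Type*} {s : Set β} {B : ℝ}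
    (h : ∀ T : Finset β, ↑T ⊆ s → (#T : ℝ) ≤ B) : s.Finite ∧ (s.ncard : ℝ) ≤ B := by
  have hfin : s.Finite := by
    by_contra hinf
    obtain ⟨T, hTs, hT⟩ := Set.Infinite.exists_subset_card_eq hinf (⌊B⌋₊ + 1)
    exact (Nat.lt_of_floor_lt (hT ▸ Nat.lt_succ_self _)).not_ge (h T hTs)
  exact ⟨hfin, Set.ncard_eq_toFinset_card s hfin ▸ h _ hfin.coe_toFinset.subset⟩

theorem sum_ite_le {α : Type*} [Fintype α] (p : α → Prop) [DecidablePred p] (u : ℝ) {v : ℝ}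
    (hv : 0 ≤ v) : ∑ j, (if p j then u else v) ≤ #{j | p j} * u + Fintype.card α * v := by
  rw [sum_ite, sum_const, sum_const, nsmul_eq_mul, nsmul_eq_mul]
  gcongr
  exact card_filter_le _ _

theorem sum_ite_eq_or_eq_le {α : Type*} [Fintype α] [DecidableEq α] (a b : α) {s : ℝ}
    (hs : 0 ≤ s) : ∑ j, (if j = a ∨ j = b then s else 1) ≤ Fintype.card α + 2 * s := by
  have hcard : #{j | j = a ∨ j = b} ≤ 2 :=
    (card_le_card fun j => by simp).trans (card_le_two (a := a) (b := b))
  calc _ ≤ #{j | j = a ∨ j = b} * s + Fintype.card α * 1 := sum_ite_le _ s zero_le_one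
    _ ≤ 2 * s + Fintype.card α := by
      rw [mul_one]
      gcongr
      exact_mod_cast hcard
    _ = Fintype.card α + 2 * s := add_comm _ _

variable {ι α : Type*} [Fintype α] [DecidableEq α]

theorem card_le_mul_pow_of_fiber_card_le {T : Finset (ι → α)} {E : Finset ι} {φ : ι → α → ℝ}
    {K c : ℝ} (hK : 0 ≤ K) (hφ : ∀ i j, 0 ≤ φ i j) (hc : ∀ i, ∑ j, φ i j ≤ c)
    (hT : ∀ a ∈ T, (#{b ∈ T | ∀ i ∈ E, b i = a i} : ℝ) ≤ K * ∏ i ∈ E, φ i (a i)) :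
    (#T : ℝ) ≤ K * c ^ #E := by
  classical
  have hfiber (g : E → α) : (#{b ∈ T | E.restrict b = g} : ℝ) ≤ K * ∏ i : E, φ i (g i) := by
    rcases eq_empty_or_nonempty {b ∈ T | E.restrict b = g} with hg | ⟨a, ha⟩
    · rw [hg, card_empty, Nat.cast_zero]
      exact mul_nonneg hK (prod_nonneg fun i _ => hφ i (g i))
    · obtain ⟨haT, rfl⟩ := mem_filter.1 ha
      simpa only [funext_iff, Subtype.forall, restrict, prod_coe_sort E fun i => φ i (a i)]
        using hT a haT
  calc (#T : ℝ) = ∑ g : E → α, (#{b ∈ T | E.restrict b = g} : ℝ) := by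
        exact_mod_cast card_eq_sum_card_fiberwise fun a _ => mem_coe.2 (mem_univ (E.restrict a))
    _ ≤ ∑ g : E → α, K * ∏ i : E, φ i (g i) := sum_le_sum fun g _ => hfiber g
    _ = K * ∏ i : E, ∑ j, φ i j := by
        rw [← mul_sum, prod_univ_sum, Fintype.piFinset_univ]
    _ ≤ K * ∏ _i : E, c := by
        gcongr with i
        · exact fun i _ => sum_nonneg fun j _ => hφ i j
        · exact hc i
    _ = K * c ^ #E := by simp

theorem card_le_mul_exp_of_fiber_card_le {T : Finset (ι → α)} {E : Finset ι} {w : ι → α} {m : ℕ}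
    {K x : ℝ} (hK : 0 ≤ K) (hx : 0 ≤ x) (hE : #E ≤ m)
    (hT : ∀ a ∈ T, (#{b ∈ T | ∀ i ∈ E, b i = a i} : ℝ) ≤
      K * (x / Fintype.card α) ^ #{i ∈ E | a i ≠ w i}) :
    (#T : ℝ) ≤ K * exp (x * m) := by
  have hsum (i : ι) : ∑ j, (if j = w i then 1 else x / Fintype.card α) ≤ 1 + x := by
    have hα : (Fintype.card α : ℝ) ≠ 0 := mod_cast (Fintype.card_pos_iff.2 ⟨w i⟩).ne'
    simpa [filter_eq', mul_div_cancel₀ x hα] using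
      sum_ite_le (· = w i) 1 (by positivity : 0 ≤ x / Fintype.card α)
  calc (#T : ℝ) ≤ K * (1 + x) ^ #E :=
        card_le_mul_pow_of_fiber_card_le
          (φ := fun i j => if j = w i then 1 else x / Fintype.card α) hK
          (fun i j => by positivity) hsum fun a ha => by simpa [prod_ite, div_pow] using hT a ha
    _ ≤ K * exp x ^ m := by
        gcongr
        exact (pow_le_pow_left₀ (by positivity) (by linarith [add_one_le_exp x]) _).trans
          (pow_le_pow_right₀ (one_le_exp hx) hE)
    _ = K * exp (x * m) := by rw [← exp_nat_mul, mul_comm x]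

end Counting

section Potential

variable {L r ρ d : ℕ}

/-- A potential for the recursion `overhead_add_two_mul_le`, which governs the rounds of the
search: about `log₂ ρ` rounds halve the number `ρ` of wrong coordinates up to the error `L`, at
most `L` more rounds follow, and each round costs a factor `2 ^ L`. The argument `(ρ - L) * 2` of
the logarithm encodes `log₂ (ρ - L) + 1` for `L < ρ` and `0` otherwise. -/
def overhead (L ρ : ℕ) : ℕ := L * (min ρ L + Nat.log 2 ((ρ - L) * 2))

theorem overhead_add_two_mul_le (hr : r < ρ) (hL : 2 * r ≤ ρ + L) :
    overhead L r + 2 * r ≤ overhead L ρ + ρ := by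
  suffices h : min r L + Nat.log 2 ((r - L) * 2) + 1 ≤ min ρ L + Nat.log 2 ((ρ - L) * 2) by
    have := Nat.mul_le_mul_left L h
    unfold overhead
    linarith
  rcases le_or_gt ρ L with hρL | hLρ
  · rw [Nat.sub_eq_zero_of_le hρL, Nat.sub_eq_zero_of_le (hr.le.trans hρL)]
    omega
  · have hlog : Nat.log 2 ((r - L) * 2) ≤ Nat.log 2 (ρ - L) := Nat.log_mono_right (by omega)
    rw [Nat.log_mul_base one_lt_two (Nat.sub_ne_zero_of_lt hLρ)]
    omega

theorem two_pow_overhead_le (hd : 1 ≤ d) (hρ : ρ ≤ d) :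
    2 ^ overhead L ρ ≤ 2 ^ (L * L) * (2 * d) ^ L := by
  have hlog : 2 ^ Nat.log 2 ((ρ - L) * 2) ≤ 2 * d := by
    rcases eq_or_ne ((ρ - L) * 2) 0 with h | h
    · rw [h, Nat.log_zero_right]
      omega
    · exact (Nat.pow_log_le_self 2 h).trans (by omega)
  calc 2 ^ overhead L ρ = 2 ^ (L * min ρ L) * (2 ^ Nat.log 2 ((ρ - L) * 2)) ^ L := by
        rw [overhead, mul_add, pow_add, ← pow_mul, mul_comm L (Nat.log _ _)]
    _ ≤ 2 ^ (L * L) * (2 * d) ^ L := by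
        gcongr
        · norm_num
        · exact min_le_right ρ L

theorem two_pow_overhead_mul_half_le {q m : ℕ} {n x : ℝ} (hn : 0 < n) (hx : 0 < x)
    (hr : overhead L r + 2 * r ≤ overhead L ρ + ρ) (hq : r + q = ρ) :
    2 ^ (overhead L r + r) * (n / (x / 2)) ^ r * exp (2 * (x / 2) * m) ≤
      2 ^ (overhead L ρ + ρ) * (n / x) ^ ρ * exp (x * m) * (x / n) ^ q := by
  have hcancel : (n / x) ^ ρ * (x / n) ^ q = (n / x) ^ r := by
    rw [← hq, pow_add, mul_assoc, ← mul_pow, div_mul_div_cancel₀ hx.ne', div_self hn.ne',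
      one_pow, mul_one]
  calc _ = 2 ^ (overhead L r + 2 * r) * (n / x) ^ r * exp (x * m) := by
        rw [mul_div_cancel₀ x two_ne_zero, show n / (x / 2) = 2 * (n / x) by field_simp, mul_pow]
        ring
    _ ≤ 2 ^ (overhead L ρ + ρ) * (n / x) ^ r * exp (x * m) := by
        gcongr
        norm_num
    _ = _ := by rw [← hcancel]; ring

end Potential

section Search

theorem piecewise_union_congr {ι α : Type*} [DecidableEq ι] {F E : Finset ι} {a b t₀ : ι → α}
    (hF : F.piecewise b t₀ = F.piecewise a t₀) (hE : ∀ i ∈ E, b i = a i) :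
    (F ∪ E).piecewise b t₀ = (F ∪ E).piecewise a t₀ := by
  funext i
  by_cases hiF : i ∈ F
  · simpa [hiF] using congrFun hF i
  · by_cases hiE : i ∈ E <;> simp [hiF, hiE, hE]

variable {n L m : ℕ} {A : Set (ℕ → Fin n)} {D : Finset ℕ} {t₀ : ℕ → Fin n}

theorem IsGuide.hDist_piecewise_union {F E : Finset ℕ} {a t : ℕ → Fin n} {ρ : ℕ}
    (ht : IsGuide L A (F.piecewise a t₀) t) (ha : a ∈ A) (hFE : ∀ i ∉ F ∪ E, t i = t₀ i)
    (hρ : hDist n a (F.piecewise a t₀) = ρ) (hρ0 : ρ ≠ 0) :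
    ∃ r : ℕ, hDist n a ((F ∪ E).piecewise a t₀) = r ∧
      r + #{i ∈ E | a i ≠ F.piecewise a t₀ i} = ρ ∧ r < ρ ∧ 2 * r ≤ ρ + L := by
  set w := F.piecewise a t₀ with hw
  set w' := (F ∪ E).piecewise a t₀ with hw'
  have hbetween (i) : w' i = a i ∨ w' i = w i := by
    by_cases hF : i ∈ F <;> by_cases hE : i ∈ E <;> simp [hw, hw', hF, hE]
  have haw : a ≠ w := fun h => hρ0 (by simpa [← h, hDist_self] using hρ.symm)
  obtain ⟨hlt, hhalf⟩ := ht.two_mul_hDist_le ha haw hbetween fun i => by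
    by_cases hi : i ∈ F ∪ E
    · simp only [hw', piecewise_eq_of_mem _ _ _ hi, true_or]
    · simp only [hw', piecewise_eq_of_notMem _ _ _ hi, hFE i hi, or_true]
  have hw'w : hDist n w' w = #{i ∈ E | a i ≠ w i} := by
    rw [hDist_eq_card_filter (F := E) fun i hi => by simp [hw, hw', piecewise, hi]]
    congr 2
    exact filter_congr fun i hi => by simp [hw', hi]
  have hsplit : hDist n a w' + hDist n w' w = hDist n a w := hDist_add_hDist_of_between hbetween
  rw [hρ] at hlt hhalf hsplit
  obtain ⟨r, hr⟩ := ENat.ne_top_iff_exists.1 (hlt.trans_le le_top).ne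
  rw [hw'w] at hsplit
  rw [← hr] at hlt hhalf hsplit
  exact ⟨r, hr.symm, mod_cast hsplit, mod_cast hlt, mod_cast hhalf⟩

theorem IsGuide.exists_fiber_hDist {F E : Finset ℕ} {a t : ℕ → Fin n} {ρ : ℕ}
    (ht : IsGuide L A (F.piecewise a t₀) t) (ha : a ∈ A) (hFE : ∀ i ∉ F ∪ E, t i = t₀ i)
    (hρ : hDist n a (F.piecewise a t₀) = ρ) (hρ0 : ρ ≠ 0) :
    ∃ r : ℕ, r + #{i ∈ E | a i ≠ F.piecewise a t₀ i} = ρ ∧ r < ρ ∧ 2 * r ≤ ρ + L ∧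
      ∀ b ∈ A, F.piecewise b t₀ = F.piecewise a t₀ → hDist n b (F.piecewise a t₀) = ρ →
        (∀ i ∈ E, b i = a i) → hDist n b ((F ∪ E).piecewise a t₀) = r := by
  obtain ⟨r, -, hrq, hrρ, hhalf⟩ := ht.hDist_piecewise_union ha hFE hρ hρ0
  refine ⟨r, hrq, hrρ, hhalf, fun b hb hF hbρ hE => ?_⟩
  rw [← hF] at ht hbρ
  obtain ⟨r', hr', hr'q, -⟩ := ht.hDist_piecewise_union hb hFE hbρ hρ0
  rw [hF, filter_congr fun i hi => by rw [hE i hi]] at hr'q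
  rw [← piecewise_union_congr hF hE, hr', show r' = r by omega]

/-- Every guess at finite distance from `t₀` has a guide in the search for words of `A` that
differs from `t₀` in at most `m` coordinates outside `D`. In a search that already knows the
coordinates in `D`, each round therefore queries at most `m` new ones. -/
def HasGuides (L m : ℕ) (A : Set (ℕ → Fin n)) (D : Finset ℕ) (t₀ : ℕ → Fin n) : Prop :=
  ∀ w, hDist n w t₀ < ⊤ → ∃ t, ∃ E : Finset ℕ,
    #E ≤ m ∧ (∀ i ∉ D ∪ E, t i = t₀ i) ∧ IsGuide L A w t

theorem HasGuides.card_le_of_piecewise_eq (hguide : HasGuides L m A D t₀) (ρ : ℕ)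
    {F : Finset ℕ} (hDF : D ⊆ F) {w : ℕ → Fin n} {T : Finset (ℕ → Fin n)}
    (hTA : ∀ a ∈ T, a ∈ A) (hTw : ∀ a ∈ T, F.piecewise a t₀ = w)
    (hTρ : ∀ a ∈ T, hDist n a w = ρ) {x : ℝ} (hx : 0 < x) :
    (#T : ℝ) ≤ 2 ^ (overhead L ρ + ρ) * (n / x) ^ ρ * exp (2 * x * m) := by
  have hn : (0 : ℝ) < n := mod_cast (t₀ 0).pos
  induction ρ using Nat.strong_induction_on generalizing F w T x with | _ ρ ih => ?_
  rcases eq_or_ne ρ 0 with rfl | hρ0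
  · have hT : #T ≤ 1 := card_le_one.2 fun a ha b hb =>
      (hDist_eq_zero.1 (hTρ a ha)).trans (hDist_eq_zero.1 (hTρ b hb)).symm
    calc (#T : ℝ) ≤ 1 := mod_cast hT
      _ ≤ 2 ^ (overhead L 0 + 0) * exp (2 * x * m) :=
        one_le_mul_of_one_le_of_one_le (one_le_pow₀ one_le_two) (one_le_exp (by positivity))
      _ = 2 ^ (overhead L 0 + 0) * (n / x) ^ 0 * exp (2 * x * m) := by rw [pow_zero, mul_one]
  rcases T.eq_empty_or_nonempty with rfl | ⟨b, hb⟩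
  · rw [card_empty, Nat.cast_zero]
    positivity
  obtain ⟨t, E, hEm, ht, hwt⟩ := hguide w (hTw b hb ▸ hDist_piecewise_lt_top F b t₀)
  have hFE (i) (hi : i ∉ F ∪ E) : t i = t₀ i := ht i (notMem_mono (union_subset_union_left hDF) hi)
  calc (#T : ℝ)
      ≤ 2 ^ (overhead L ρ + ρ) * (n / x) ^ ρ * exp (x * m) * exp (x * m) :=
        card_le_mul_exp_of_fiber_card_le (E := E) (w := w) (by positivity) hx.le hEm fun a ha => ?_
    _ = 2 ^ (overhead L ρ + ρ) * (n / x) ^ ρ * exp (2 * x * m) := by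
        rw [mul_assoc, ← exp_add, mul_assoc 2 x, two_mul]
  have hw := hTw a ha
  rw [Fintype.card_fin]
  subst hw
  obtain ⟨r, hrq, hrρ, hhalf, hr⟩ := hwt.exists_fiber_hDist (hTA a ha) hFE (hTρ a ha) hρ0
  refine (ih r hrρ (F := F ∪ E) (w := (F ∪ E).piecewise a t₀) (hDF.trans subset_union_left)
    ?_ ?_ ?_ (half_pos hx)).trans <|
    two_pow_overhead_mul_half_le hn hx (overhead_add_two_mul_le hrρ hhalf) hrq
  all_goals
    intro b hb
    obtain ⟨hbT, hba⟩ := mem_filter.1 hb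
  exacts [hTA b hbT, piecewise_union_congr (hTw b hbT) hba,
    hr b (hTA b hbT) (hTw b hbT) (hTρ b hbT) hba]

end Search

section Agreement

variable {n : ℕ} {a t t₀ t₁ : ℕ → Fin n} {D : Finset ℕ}

theorem hDist_piecewise_le_card_eq (h : hDist n a t ≤ #D) :
    hDist n a (D.piecewise a t) ≤ #{i ∈ D | a i = t i} := by
  have hsplit : hDist n a (D.piecewise a t) + hDist n (D.piecewise a t) t = hDist n a t :=
    hDist_add_hDist_of_between fun i => by by_cases hi : i ∈ D <;> simp [hi]
  have hD : hDist n (D.piecewise a t) t = #{i ∈ D | a i ≠ t i} := by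
    rw [hDist_eq_card_filter (F := D) fun i hi => by simp [hi]]
    congr 2
    exact filter_congr fun i hi => by simp [hi]
  refine (ENat.add_le_add_iff_right (ENat.natCast_ne_top #{i ∈ D | a i ≠ t i})).1 ?_
  calc hDist n a (D.piecewise a t) + #{i ∈ D | a i ≠ t i} ≤ #D := by rwa [← hD, hsplit]
    _ = #{i ∈ D | a i = t i} + #{i ∈ D | a i ≠ t i} :=
        mod_cast (card_filter_add_card_filter_not (fun i => a i = t i)).symm

theorem two_mul_hDist_piecewise_le (hD : ∀ i, i ∈ D ↔ t₀ i ≠ t₁ i) (h₀ : hDist n a t₀ ≤ #D)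
    (h₁ : hDist n a t₁ ≤ #D) :
    2 * hDist n a (D.piecewise a t₀) ≤ #{i ∈ D | a i = t₀ i ∨ a i = t₁ i} := by
  have hpiece : D.piecewise a t₁ = D.piecewise a t₀ := by
    ext i
    by_cases hi : t₀ i = t₁ i <;> simp [piecewise, hD, hi]
  have hdisj : Disjoint {i ∈ D | a i = t₀ i} {i ∈ D | a i = t₁ i} :=
    disjoint_filter.2 fun i hi h₀ h₁ => (hD i).1 hi (h₀.symm.trans h₁)
  calc 2 * hDist n a (D.piecewise a t₀)
      = hDist n a (D.piecewise a t₀) + hDist n a (D.piecewise a t₁) := by rw [hpiece, two_mul]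
    _ ≤ #{i ∈ D | a i = t₀ i} + #{i ∈ D | a i = t₁ i} :=
        add_le_add (hDist_piecewise_le_card_eq h₀) (hDist_piecewise_le_card_eq h₁)
    _ = #{i ∈ D | a i = t₀ i ∨ a i = t₁ i} := by
        rw [filter_or, card_union_of_disjoint hdisj, Nat.cast_add]

end Agreement

section Bound

variable {n d ℓ L : ℕ} {S A : Set (ℕ → Fin n)} {w t₀ t₁ : ℕ → Fin n} {D : Finset ℕ}

theorem IsDMaximal.hasGuides (hn : 2 ≤ n) (hS : IsDMaximal n d S)
    (hL : ¬ ContainsBall n S (L + 1)) (ht₀ : t₀ ∈ S)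
    (hD : ∀ t ∈ S, 2 * hDist n t (D.piecewise t t₀) ≤ d) :
    HasGuides L (d / 2) (Sell n S ℓ) D t₀ := by
  intro w hw
  obtain ⟨t, ht, hmax⟩ := exists_farthest ht₀ (hS.1 t₀ ht₀) hw
  have hfin : {i | t i ≠ t₀ i}.Finite := Set.finite_of_encard_le_coe (hS.1 t ht t₀ ht₀)
  let E := hfin.toFinset \ D
  have hE : hDist n t (D.piecewise t t₀) = #E := by
    rw [hDist_eq_card_filter (F := E) fun i hi => by by_cases hiD : i ∈ D <;> simp_all [E]]
    congr 2
    exact filter_true_of_mem fun i hi => by simp_all [E]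
  have hcard : 2 * #E ≤ d := mod_cast (hE ▸ hD t ht : 2 * (#E : ℕ∞) ≤ d)
  exact ⟨t, E, by omega, fun i hi => by simp_all [E], hS.isGuide_of_farthest hn hL ht hmax⟩

theorem HasGuides.card_le_of_piecewise_eq_of_two_mul_le (hguide : HasGuides L (d / 2) A D t₀)
    {ρ k : ℕ} {T : Finset (ℕ → Fin n)} (hTA : ∀ a ∈ T, a ∈ A)
    (hTw : ∀ a ∈ T, D.piecewise a t₀ = w) (hTρ : ∀ a ∈ T, hDist n a w = ρ) (hk : 2 * ρ ≤ k)
    {x s : ℝ} (hx : 0 < x) (hs : 1 ≤ s) (hsx : s ^ 2 * x = 2 * n) :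
    (#T : ℝ) ≤ 2 ^ overhead L ρ * exp x ^ d * s ^ k := by
  have hbase : 2 * (n / x) = s ^ 2 := by
    rw [← mul_div_assoc, div_eq_iff hx.ne', hsx]
  calc (#T : ℝ) ≤ 2 ^ (overhead L ρ + ρ) * (n / x) ^ ρ * exp (2 * x * (d / 2 : ℕ)) :=
        hguide.card_le_of_piecewise_eq ρ subset_rfl hTA hTw hTρ hx
    _ = 2 ^ overhead L ρ * exp (x * (2 * (d / 2) : ℕ)) * s ^ (2 * ρ) := by
        rw [pow_mul, ← hbase, Nat.cast_mul, Nat.cast_ofNat]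
        ring_nf
    _ ≤ 2 ^ overhead L ρ * exp (x * d) * s ^ k := by
        gcongr
        exact Nat.mul_div_le d 2
    _ = 2 ^ overhead L ρ * exp x ^ d * s ^ k := by rw [← exp_nat_mul, mul_comm x]

theorem HasGuides.card_le_of_hDist_piecewise_eq (hguide : HasGuides L (d / 2) A D t₀) (hDd : #D = d)
    {ρ : ℕ} {T : Finset (ℕ → Fin n)} (hTA : ∀ a ∈ T, a ∈ A)
    (hTρ : ∀ a ∈ T, hDist n a (D.piecewise a t₀) = ρ)
    (hTD : ∀ a ∈ T, 2 * ρ ≤ #{i ∈ D | a i = t₀ i ∨ a i = t₁ i})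
    {x s : ℝ} (hx : 0 < x) (hs : 1 ≤ s) (hsx : s ^ 2 * x = 2 * n) :
    (#T : ℝ) ≤ 2 ^ overhead L ρ * ((n + 2 * s) * exp x) ^ d := by
  have hs0 : 0 ≤ s := zero_le_one.trans hs
  have hsum (i : ℕ) : ∑ j, (if j = t₀ i ∨ j = t₁ i then s else 1) ≤ n + 2 * s := by
    simpa only [Fintype.card_fin] using sum_ite_eq_or_eq_le (t₀ i) (t₁ i) hs0
  calc (#T : ℝ) ≤ 2 ^ overhead L ρ * exp x ^ d * (n + 2 * s) ^ #D := by
        refine card_le_mul_pow_of_fiber_card_le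
          (φ := fun i j => if j = t₀ i ∨ j = t₁ i then s else 1)
          (by positivity) (fun i j => by positivity) hsum fun a ha => ?_
        rw [prod_ite, prod_const, prod_const_one, mul_one]
        refine hguide.card_le_of_piecewise_eq_of_two_mul_le (w := D.piecewise a t₀)
          ?_ ?_ ?_ (hTD a ha) hx hs hsx
        all_goals
          intro b hb
          obtain ⟨hbT, hba⟩ := mem_filter.1 hb
          have hpiece : D.piecewise b t₀ = D.piecewise a t₀ :=
            piecewise_congr D hba fun _ _ => rfl
        exacts [hTA b hbT, hpiece, hpiece ▸ hTρ b hbT]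
    _ = 2 ^ overhead L ρ * ((n + 2 * s) * exp x) ^ d := by rw [hDd, mul_pow]; ring

theorem HasGuides.card_le_of_two_mul_hDist_piecewise_le (hguide : HasGuides L (d / 2) A D t₀)
    (hd : 1 ≤ d) (hDd : #D = d) {T : Finset (ℕ → Fin n)} (hTA : ∀ a ∈ T, a ∈ A)
    (hTD : ∀ a ∈ T, 2 * hDist n a (D.piecewise a t₀) ≤ #{i ∈ D | a i = t₀ i ∨ a i = t₁ i})
    {x s : ℝ} (hx : 0 < x) (hs : 1 ≤ s) (hsx : s ^ 2 * x = 2 * n) :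
    (#T : ℝ) ≤ 2 ^ (L * L + L + 1) * d ^ (L + 1) * ((n + 2 * s) * exp x) ^ d := by
  have hdist (a) (ha : a ∈ T) : ∃ ρ : ℕ, hDist n a (D.piecewise a t₀) = ρ ∧
      2 * ρ ≤ #{i ∈ D | a i = t₀ i ∨ a i = t₁ i} := by
    have h := hTD a ha
    obtain ⟨ρ, hρ⟩ := ENat.ne_top_iff_exists.1 fun htop : hDist n a (D.piecewise a t₀) = ⊤ => by
      simp [htop] at h
    rw [← hρ] at h
    exact ⟨ρ, hρ.symm, mod_cast h⟩
  choose! f hf using hdist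
  have hfd (a) (ha : a ∈ T) : f a ∈ range (d / 2 + 1) := by
    have : 2 * f a ≤ d := hDd ▸ (hf a ha).2.trans (card_filter_le _ _)
    exact mem_range.2 (by omega)
  have hcount (ρ) (hρ : ρ ∈ range (d / 2 + 1)) : (#{a ∈ T | f a = ρ} : ℝ) ≤
      2 ^ (L * L) * (2 * d) ^ L * ((n + 2 * s) * exp x) ^ d := by
    calc (#{a ∈ T | f a = ρ} : ℝ) ≤ 2 ^ overhead L ρ * ((n + 2 * s) * exp x) ^ d := by
          refine hguide.card_le_of_hDist_piecewise_eq hDd (t₁ := t₁) ?_ ?_ ?_ hx hs hsx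
          all_goals
            intro a ha
            obtain ⟨haT, rfl⟩ := mem_filter.1 ha
          exacts [hTA a haT, (hf a haT).1, (hf a haT).2]
      _ ≤ 2 ^ (L * L) * (2 * d) ^ L * ((n + 2 * s) * exp x) ^ d := by
          gcongr
          rw [mem_range] at hρ
          exact_mod_cast two_pow_overhead_le hd (by omega : ρ ≤ d)
  calc (#T : ℝ) = ∑ ρ ∈ range (d / 2 + 1), (#{a ∈ T | f a = ρ} : ℝ) :=
        mod_cast card_eq_sum_card_fiberwise hfd
    _ ≤ (d / 2 + 1 : ℕ) * (2 ^ (L * L) * (2 * d) ^ L * ((n + 2 * s) * exp x) ^ d) := by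
        simpa only [nsmul_eq_mul, card_range] using sum_le_card_nsmul _ _ _ hcount
    _ ≤ (2 * d) * (2 ^ (L * L) * (2 * d) ^ L * ((n + 2 * s) * exp x) ^ d) := by
        gcongr
        exact_mod_cast (by omega : d / 2 + 1 ≤ 2 * d)
    _ = 2 ^ (L * L + L + 1) * d ^ (L + 1) * ((n + 2 * s) * exp x) ^ d := by
        rw [mul_pow 2 (d : ℝ), pow_add, pow_add]
        ring

theorem IsDMaximal.card_le_of_subset_sell (hn : 2 ≤ n) (hd : 1 ≤ d) (hS : IsDMaximal n d S)
    (hL : ¬ ContainsBall n S (L + 1)) {T : Finset (ℕ → Fin n)} (hT : ↑T ⊆ Sell n S ℓ)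
    {x s : ℝ} (hx : 0 < x) (hs : 1 ≤ s) (hsx : s ^ 2 * x = 2 * n) :
    (#T : ℝ) ≤ 2 ^ (L * L + L + 1) * d ^ (L + 1) * ((n + 2 * s) * exp x) ^ d := by
  obtain ⟨t₀, ht₀, t₁, ht₁, hd₀₁⟩ := hS.2.1
  have hfin : {i | t₀ i ≠ t₁ i}.Finite := Set.finite_of_encard_eq_coe hd₀₁
  let D := hfin.toFinset
  have hD (i) : i ∈ D ↔ t₀ i ≠ t₁ i := hfin.mem_toFinset
  have hDd : #D = d := by
    rw [hDist, hfin.encard_eq_coe_toFinset_card] at hd₀₁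
    exact_mod_cast hd₀₁
  have hagree (a) (ha : a ∈ S) :
      2 * hDist n a (D.piecewise a t₀) ≤ #{i ∈ D | a i = t₀ i ∨ a i = t₁ i} :=
    two_mul_hDist_piecewise_le hD (hDd ▸ hS.1 a ha t₀ ht₀) (hDd ▸ hS.1 a ha t₁ ht₁)
  have houtside (a) (ha : a ∈ S) : 2 * hDist n a (D.piecewise a t₀) ≤ d :=
    (hagree a ha).trans (mod_cast hDd ▸ card_filter_le _ _)
  have hguide : HasGuides L (d / 2) (Sell n S ℓ) D t₀ := hS.hasGuides hn hL ht₀ houtside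
  exact hguide.card_le_of_two_mul_hDist_piecewise_le hd hDd (fun a ha => hT ha)
    (fun a ha => hagree a (hT ha).1) hx hs hsx

end Bound

theorem add_mul_exp_le {y : ℝ} (hy : 1 ≤ y) :
    (y ^ 3 + 2 * (2 * y ^ 2)) * exp (1 / (2 * y)) ≤ y ^ 3 + 8 * y ^ 2 := by
  have : 0 < y := zero_lt_one.trans_le hy
  have hexp : exp (1 / (2 * y)) ≤ 1 + 1 / (2 * y) + (1 / (2 * y)) ^ 2 := by
    have habs : |1 / (2 * y)| ≤ 1 := by
      rw [abs_of_pos (by positivity), div_le_one (by positivity)]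
      linarith
    linarith [(abs_le.1 (abs_exp_sub_one_sub_id_le habs)).2]
  calc _ ≤ (y ^ 3 + 2 * (2 * y ^ 2)) * (1 + 1 / (2 * y) + (1 / (2 * y)) ^ 2) := by gcongr
    _ = y ^ 3 + 9 / 2 * y ^ 2 + 9 / 4 * y + 1 := by field_simp; ring
    _ ≤ y ^ 3 + 8 * y ^ 2 := by nlinarith

theorem exists_mul_exp_le {n : ℝ} (hn : 1 ≤ n) : ∃ x s : ℝ, 0 < x ∧ 1 ≤ s ∧ s ^ 2 * x = 2 * n ∧
    (n + 2 * s) * exp x ≤ n + 8 * n ^ ((2 : ℝ) / 3) := by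
  obtain ⟨y, hy, rfl⟩ : ∃ y : ℝ, 1 ≤ y ∧ y ^ 3 = n :=
    ⟨n ^ ((1 : ℝ) / 3), one_le_rpow hn (by norm_num), by
      rw [← rpow_natCast, ← rpow_mul (by linarith)]; norm_num⟩
  have hy0 : 0 < y := zero_lt_one.trans_le hy
  have hpow : (y ^ 3) ^ ((2 : ℝ) / 3) = y ^ 2 := by
    rw [← rpow_natCast y 3, ← rpow_mul hy0.le]
    norm_num
  refine ⟨1 / (2 * y), 2 * y ^ 2, by positivity, by nlinarith, by field_simp, ?_⟩
  rw [hpow]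
  exact add_mul_exp_le hy

theorem stmt3 (n L : ℕ) (hn : 2 ≤ n) :
    ∃ C : ℝ, 0 < C ∧
      ∀ d : ℕ, 1 ≤ d → ∀ ℓ : ℕ, ∀ S : Set (ℕ → Fin n),
        IsDMaximal n d S → ¬ ContainsBall n S (L + 1) →
        (Sell n S ℓ).Finite ∧
          ((Sell n S ℓ).ncard : ℝ) ≤
            C * (d : ℝ) ^ (2 * L + 2) * ((n : ℝ) + 8 * (n : ℝ) ^ ((2 : ℝ) / 3)) ^ d := by
  obtain ⟨x, s, hx, hs, hsx, hbase⟩ := exists_mul_exp_le (n := n) (by norm_cast; omega)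
  refine ⟨2 ^ (L * L + L + 1), by positivity, fun d hd ℓ S hS hL => ?_⟩
  refine finite_and_ncard_le_of_forall_finset fun T hT => ?_
  calc (#T : ℝ) ≤ 2 ^ (L * L + L + 1) * d ^ (L + 1) * ((n + 2 * s) * exp x) ^ d :=
        hS.card_le_of_subset_sell hn hd hL hT hx hs hsx
    _ ≤ 2 ^ (L * L + L + 1) * d ^ (2 * L + 2) * (n + 8 * (n : ℝ) ^ ((2 : ℝ) / 3)) ^ d := by
        gcongr
        · exact_mod_cast hd
        · omega
        · norm_num
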